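/- Let F : [a,b] × [0,T) → ℝ² be a smooth planar curve shortening flow with nonvanishing speed, satisfying the Dirichlet boundary condition κ(a,t) = κ(b,t) = 0 for all t. Then d/dt ∫_a^b κ² v du = ∫_a^b ( -2(∂_s κ)² + κ⁴ ) v du for every t ∈ (0,T). -/

import Mathlib

open Real MeasureTheory Set Filter

noncomputable section

/-- The Euclidean plane. -/
abbrev E2 : Type := EuclideanSpace ℝ (Fin 2)

/-- Rotation of a vector by +π/2. -/
def rot (w : E2) : E2 := !₂[-(w 1), w 0]

namespace CSF

variable (F : ℝ → ℝ → E2)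

/-- The partial derivative ∂ᵤF. -/
def pu (u t : ℝ) : E2 := deriv (fun x => F x t) u

/-- The partial derivative ∂ₜF. -/
def pt (u t : ℝ) : E2 := deriv (fun x => F u x) t

/-- The speed v = ‖∂ᵤF‖. -/
def speed (u t : ℝ) : ℝ := ‖pu F u t‖

/-- The arclength derivative ∂ₛ f = v⁻¹ ∂ᵤ f of a quantity along the flow. -/
def sderiv {X : Type*} [NormedAddCommGroup X] [NormedSpace ℝ X]
    (f : ℝ → ℝ → X) (u t : ℝ) : X :=
  (speed F u t)⁻¹ • deriv (fun x => f x t) u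

/-- The unit tangent T = ∂ₛ F. -/
def tang (u t : ℝ) : E2 := (speed F u t)⁻¹ • pu F u t

/-- The unit normal N, the tangent rotated by +π/2. -/
def nor (u t : ℝ) : E2 := rot (tang F u t)

/-- The curvature κ = ⟨∂ₛT, N⟩. -/
def curv (u t : ℝ) : ℝ := inner (𝕜 := ℝ) (sderiv F (tang F) u t) (nor F u t)

/-- `F` is a smooth planar curve shortening flow with nonvanishing speed on `[a,b] × [0,T)`:
it is smooth, `∂ᵤF ≠ 0` on the domain, and `∂ₜF = κN` on the domain. -/
def IsCSF (a b T : ℝ) : Prop :=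
  ContDiff ℝ (⊤ : ℕ∞) (fun p : ℝ × ℝ => F p.1 p.2) ∧
  (∀ u ∈ Icc a b, ∀ t ∈ Ico 0 T, pu F u t ≠ 0) ∧
  (∀ u ∈ Icc a b, ∀ t ∈ Ico 0 T, pt F u t = curv F u t • nor F u t)

end CSF

/-!
Since the flow equation reads `∂ₜF = κN`, the Frenet equations `∂ᵤT = κvN`, `∂ᵤN = -κvT` give
`∂ᵤ∂ₜF = v(∂ₛκ)N - κ²vT`. By equality of mixed partials this is `∂ₜ(vT)`, whose components along
`T` and `N` give `∂ₜv = -κ²v` and `∂ₜT = (∂ₛκ)N`. Equality of mixed partials for `T` then gives,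
along `N`, `∂ₜ(κv) = ∂ᵤ∂ₛκ`, so that `∂ₜ(κ²v) = 2κ ∂ᵤ∂ₛκ + κ⁴v`. Integrating by parts in `u` turns
the first term into `-2(∂ₛκ)²v` and a boundary term, which vanishes where `κ` does.
-/

section PartialDerivatives

open Function (uncurry)
open scoped Topology

variable {𝕜 X : Type*} [NontriviallyNormedField 𝕜] [NormedAddCommGroup X] [NormedSpace 𝕜 X]

/-- The partial derivative of a curried function in its first variable; `CSF.pu F` is `derivFst F`
by definition. -/
def derivFst (f : 𝕜 → 𝕜 → X) (u t : 𝕜) : X := deriv (fun x => f x t) u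

/-- The partial derivative of a curried function in its second variable; `CSF.pt F` is `derivSnd F`
by definition. -/
def derivSnd (f : 𝕜 → 𝕜 → X) (u t : 𝕜) : X := deriv (fun x => f u x) t

variable {f g : 𝕜 → 𝕜 → X} {u t : 𝕜} {m n : WithTop ℕ∞}

theorem hasDerivAt_derivFst (hf : DifferentiableAt 𝕜 (uncurry f) (u, t)) :
    HasDerivAt (fun x => f x t) (derivFst f u t) u :=
  (hf.comp (f := fun x => (x, t)) u (by fun_prop)).hasDerivAt

theorem hasDerivAt_derivSnd (hf : DifferentiableAt 𝕜 (uncurry f) (u, t)) :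
    HasDerivAt (fun x => f u x) (derivSnd f u t) t :=
  (hf.comp (f := fun x => (u, x)) t (by fun_prop)).hasDerivAt

theorem derivFst_eq_fderiv (hf : DifferentiableAt 𝕜 (uncurry f) (u, t)) :
    derivFst f u t = fderiv 𝕜 (uncurry f) (u, t) (1, 0) :=
  (hf.hasFDerivAt.comp_hasDerivAt (f := fun x => (x, t)) u
    ((hasDerivAt_id u).prodMk (hasDerivAt_const u t))).deriv

theorem derivSnd_eq_fderiv (hf : DifferentiableAt 𝕜 (uncurry f) (u, t)) :
    derivSnd f u t = fderiv 𝕜 (uncurry f) (u, t) (0, 1) :=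
  (hf.hasFDerivAt.comp_hasDerivAt (f := fun x => (u, x)) t
    ((hasDerivAt_const t u).prodMk (hasDerivAt_id t))).deriv

theorem derivFst_congr (h : uncurry f =ᶠ[𝓝 (u, t)] uncurry g) :
    derivFst f u t = derivFst g u t :=
  EventuallyEq.deriv_eq ((Continuous.prodMk_left t).continuousAt.eventually h)

theorem derivSnd_congr (h : uncurry f =ᶠ[𝓝 (u, t)] uncurry g) :
    derivSnd f u t = derivSnd g u t :=
  EventuallyEq.deriv_eq ((Continuous.prodMk_right u).continuousAt.eventually h)

theorem eventually_derivFst_eq_fderiv (hf : ContDiffAt 𝕜 n (uncurry f) (u, t)) (hn : 1 ≤ n) :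
    uncurry (derivFst f) =ᶠ[𝓝 (u, t)] fun p => fderiv 𝕜 (uncurry f) p (1, 0) :=
  ((hf.of_le hn).eventually (by simp)).mono fun _ hp =>
    derivFst_eq_fderiv (hp.differentiableAt one_ne_zero)

theorem eventually_derivSnd_eq_fderiv (hf : ContDiffAt 𝕜 n (uncurry f) (u, t)) (hn : 1 ≤ n) :
    uncurry (derivSnd f) =ᶠ[𝓝 (u, t)] fun p => fderiv 𝕜 (uncurry f) p (0, 1) :=
  ((hf.of_le hn).eventually (by simp)).mono fun _ hp =>
    derivSnd_eq_fderiv (hp.differentiableAt one_ne_zero)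

theorem contDiffAt_derivFst (hf : ContDiffAt 𝕜 n (uncurry f) (u, t)) (hmn : m + 1 ≤ n) :
    ContDiffAt 𝕜 m (uncurry (derivFst f)) (u, t) :=
  ((hf.fderiv_right hmn).clm_apply contDiffAt_const).congr_of_eventuallyEq
    (eventually_derivFst_eq_fderiv hf (le_add_self.trans hmn))

theorem contDiffAt_derivSnd (hf : ContDiffAt 𝕜 n (uncurry f) (u, t)) (hmn : m + 1 ≤ n) :
    ContDiffAt 𝕜 m (uncurry (derivSnd f)) (u, t) :=
  ((hf.fderiv_right hmn).clm_apply contDiffAt_const).congr_of_eventuallyEq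
    (eventually_derivSnd_eq_fderiv hf (le_add_self.trans hmn))

theorem derivSnd_derivFst_comm (hf : ContDiffAt 𝕜 n (uncurry f) (u, t))
    (hn : minSmoothness 𝕜 2 ≤ n) :
    derivSnd (derivFst f) u t = derivFst (derivSnd f) u t := by
  have hn2 : 1 + 1 ≤ n := by
    rw [one_add_one_eq_two]
    exact le_minSmoothness.trans hn
  have hn1 : 1 ≤ n := le_add_self.trans hn2
  have hd : DifferentiableAt 𝕜 (fderiv 𝕜 (uncurry f)) (u, t) :=
    (hf.fderiv_right hn2).differentiableAt one_ne_zero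
  have fderiv_apply (v w : 𝕜 × 𝕜) :
      fderiv 𝕜 (fun p => fderiv 𝕜 (uncurry f) p v) (u, t) w =
        fderiv 𝕜 (fderiv 𝕜 (uncurry f)) (u, t) w v := by
    simp [fderiv_clm_apply hd (differentiableAt_const v)]
  rw [derivSnd_eq_fderiv ((contDiffAt_derivFst hf hn2).differentiableAt one_ne_zero),
    derivFst_eq_fderiv ((contDiffAt_derivSnd hf hn2).differentiableAt one_ne_zero),
    (eventually_derivFst_eq_fderiv hf hn1).fderiv_eq,
    (eventually_derivSnd_eq_fderiv hf hn1).fderiv_eq, fderiv_apply, fderiv_apply]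
  exact hf.isSymmSndFDerivAt hn _ _

end PartialDerivatives

section Integration

open Function (uncurry)
open scoped Topology Interval

variable {X : Type*} [NormedAddCommGroup X] {f : ℝ → ℝ → X} {a b t : ℝ}

theorem intervalIntegrable_fst_of_continuousAt
    (hf : ∀ u ∈ [[a, b]], ContinuousAt (uncurry f) (u, t)) :
    IntervalIntegrable (fun u => f u t) volume a b :=
  ContinuousOn.intervalIntegrable fun u hu =>
    ((hf u hu).comp (f := fun x => (x, t)) (by fun_prop)).continuousWithinAt

theorem hasDerivAt_integral_of_contDiffAt [NormedSpace ℝ X]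
    (hf : ∀ u ∈ [[a, b]], ContDiffAt ℝ 1 (uncurry f) (u, t)) :
    HasDerivAt (fun x => ∫ u in a..b, f u x) (∫ u in a..b, derivSnd f u t) t := by
  have near : ∀ᶠ x in 𝓝 t, ∀ u ∈ [[a, b]], ContDiffAt ℝ 1 (uncurry f) (u, x) :=
    isCompact_uIcc.eventually_forall_of_forall_eventually fun u hu =>
      (continuous_swap.tendsto (t, u)).eventually ((hf u hu).eventually (by simp))
  obtain ⟨ε, hε, hball⟩ := Metric.nhds_basis_closedBall.mem_iff.1 near
  have hderiv {u x : ℝ} (hx : ContDiffAt ℝ 1 (uncurry f) (u, x)) :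
      ContinuousAt (uncurry (derivSnd f)) (u, x) :=
    (contDiffAt_derivSnd (m := 0) hx (zero_add 1).le).continuousAt
  have hcompact : IsCompact ([[a, b]] ×ˢ Metric.closedBall t ε) :=
    isCompact_uIcc.prod (isCompact_closedBall t ε)
  obtain ⟨C, hC⟩ := hcompact.exists_bound_of_continuousOn (f := uncurry (derivSnd f))
    fun p hp => (hderiv (hball hp.2 p.1 hp.1)).continuousWithinAt
  have integrable_slice {x : ℝ} (hx : ∀ u ∈ [[a, b]], ContDiffAt ℝ 1 (uncurry f) (u, x)) :
      IntervalIntegrable (fun u => f u x) volume a b :=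
    intervalIntegrable_fst_of_continuousAt fun u hu => (hx u hu).continuousAt
  have integrable_deriv : IntervalIntegrable (fun u => derivSnd f u t) volume a b :=
    intervalIntegrable_fst_of_continuousAt fun u hu => hderiv (hf u hu)
  refine (intervalIntegral.hasDerivAt_integral_of_dominated_loc_of_deriv_le
    (F := fun x u => f u x) (F' := fun x u => derivSnd f u x) (bound := fun _ => C)
    (Metric.closedBall_mem_nhds t hε)
    (near.mono fun x hx => (integrable_slice hx).def'.aestronglyMeasurable)
    (integrable_slice hf) integrable_deriv.def'.aestronglyMeasurable
    (.of_forall fun u hu x hx => hC (u, x) ⟨uIoc_subset_uIcc hu, hx⟩) (by simp)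
    (.of_forall fun u hu x hx => hasDerivAt_derivSnd
      ((hball hx u (uIoc_subset_uIcc hu)).differentiableAt one_ne_zero))).2

end Integration

section Plane

open scoped RealInnerProductSpace Topology

theorem inner_fderiv_eq_zero_of_norm_eq {E V : Type*} [NormedAddCommGroup E] [NormedSpace ℝ E]
    [NormedAddCommGroup V] [InnerProductSpace ℝ V] {f : E → V} {p : E} {c : ℝ}
    (hf : DifferentiableAt ℝ f p) (hc : ∀ᶠ q in 𝓝 p, ‖f q‖ = c) (w : E) :
    ⟪f p, fderiv ℝ f p w⟫ = 0 := by
  have hsq : (fun q => ‖f q‖ ^ 2) =ᶠ[𝓝 p] fun _ => c ^ 2 :=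
    hc.mono fun q hq => congrArg (· ^ 2) hq
  have h := congrArg (· w) (hf.hasFDerivAt.norm_sq.unique
    ((hasFDerivAt_const (c ^ 2) p).congr_of_eventuallyEq hsq))
  simpa using h

/-- The rotation `rot` by `+π/2` as a continuous linear map, so that it commutes with
differentiation. -/
def rotCLM : E2 →L[ℝ] E2 :=
  LinearMap.toContinuousLinearMap
    { toFun := rot
      map_add' := fun v w => by ext i; fin_cases i <;> simp [rot, add_comm]
      map_smul' := fun c w => by ext i; fin_cases i <;> simp [rot] }

theorem rot_smul (c : ℝ) (w : E2) : rot (c • w) = c • rot w := rotCLM.map_smul c w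

theorem rot_rot (w : E2) : rot (rot w) = -w := by
  ext i; fin_cases i <;> simp [rot]

theorem inner_rot_self (w : E2) : ⟪rot w, w⟫ = 0 := by
  simp [rot, PiLp.inner_apply, Fin.sum_univ_two, mul_comm]

theorem norm_rot (w : E2) : ‖rot w‖ = ‖w‖ := by
  simp [rot, EuclideanSpace.norm_eq, Fin.sum_univ_two, add_comm]

theorem eq_inner_smul_rot_of_inner_eq_zero {e w : E2} (he : ‖e‖ = 1) (h : ⟪e, w⟫ = 0) :
    w = ⟪w, rot e⟫ • rot e := by
  have he' : e 0 ^ 2 + e 1 ^ 2 = 1 := by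
    simpa [he, Fin.sum_univ_two] using (EuclideanSpace.real_norm_sq_eq e).symm
  have h' : e 0 * w 0 + e 1 * w 1 = 0 := by
    simpa [PiLp.inner_apply, Fin.sum_univ_two, mul_comm] using h
  have normal_component : ⟪w, rot e⟫ = e 0 * w 1 - e 1 * w 0 := by
    simp only [rot, PiLp.inner_apply, RCLike.inner_apply, ringHom_apply, Fin.sum_univ_two,
      Matrix.cons_val_zero, Matrix.cons_val_one]
    ring
  rw [normal_component]
  ext i
  fin_cases i
  · change w 0 = (e 0 * w 1 - e 1 * w 0) * -e 1
    linear_combination -w 0 * he' + e 0 * h'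
  · change w 1 = (e 0 * w 1 - e 1 * w 0) * e 0
    linear_combination -w 1 * he' + e 1 * h'

end Plane

namespace CSF

open Function (uncurry)
open scoped RealInnerProductSpace Topology Interval

variable {F : ℝ → ℝ → E2} {a b u t : ℝ} {m n : WithTop ℕ∞}

section Regularity

theorem contDiffAt_speed (hF : ContDiffAt ℝ n (uncurry F) (u, t)) (hp : pu F u t ≠ 0)
    (hmn : m + 1 ≤ n) : ContDiffAt ℝ m (uncurry (speed F)) (u, t) :=
  (contDiffAt_derivFst hF hmn).norm ℝ hp

theorem contDiffAt_sderiv {X : Type*} [NormedAddCommGroup X] [NormedSpace ℝ X] {f : ℝ → ℝ → X}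
    (hF : ContDiffAt ℝ n (uncurry F) (u, t)) (hp : pu F u t ≠ 0)
    (hf : ContDiffAt ℝ n (uncurry f) (u, t)) (hmn : m + 1 ≤ n) :
    ContDiffAt ℝ m (uncurry (sderiv F f)) (u, t) :=
  ((contDiffAt_speed hF hp hmn).inv (norm_ne_zero_iff.2 hp)).smul (contDiffAt_derivFst hf hmn)

theorem contDiffAt_tang (hF : ContDiffAt ℝ n (uncurry F) (u, t)) (hp : pu F u t ≠ 0)
    (hmn : m + 1 ≤ n) : ContDiffAt ℝ m (uncurry (tang F)) (u, t) :=
  contDiffAt_sderiv hF hp hF hmn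

theorem contDiffAt_nor (hF : ContDiffAt ℝ n (uncurry F) (u, t)) (hp : pu F u t ≠ 0)
    (hmn : m + 1 ≤ n) : ContDiffAt ℝ m (uncurry (nor F)) (u, t) :=
  rotCLM.contDiff.contDiffAt.comp (u, t) (contDiffAt_tang hF hp hmn)

theorem contDiffAt_curv (hF : ContDiffAt ℝ n (uncurry F) (u, t)) (hp : pu F u t ≠ 0)
    (hmn : m + 2 ≤ n) : ContDiffAt ℝ m (uncurry (curv F)) (u, t) := by
  rw [← one_add_one_eq_two, ← add_assoc] at hmn
  exact (contDiffAt_sderiv (hF.of_le (le_self_add.trans hmn)) hp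
    (contDiffAt_tang hF hp hmn) le_rfl).inner ℝ
      (contDiffAt_nor hF hp (le_self_add.trans hmn))

theorem eventually_pu_ne_zero (hF : ContDiffAt ℝ 1 (uncurry F) (u, t)) (hp : pu F u t ≠ 0) :
    ∀ᶠ q in 𝓝 (u, t), pu F q.1 q.2 ≠ 0 :=
  (contDiffAt_derivFst (m := 0) hF (zero_add 1).le).continuousAt.eventually_ne hp

theorem differentiableAt_speed (hF : ContDiffAt ℝ 2 (uncurry F) (u, t)) (hp : pu F u t ≠ 0) :
    DifferentiableAt ℝ (uncurry (speed F)) (u, t) :=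
  (contDiffAt_speed hF hp one_add_one_eq_two.le).differentiableAt one_ne_zero

theorem differentiableAt_tang (hF : ContDiffAt ℝ 2 (uncurry F) (u, t)) (hp : pu F u t ≠ 0) :
    DifferentiableAt ℝ (uncurry (tang F)) (u, t) :=
  (contDiffAt_tang hF hp one_add_one_eq_two.le).differentiableAt one_ne_zero

theorem differentiableAt_nor (hF : ContDiffAt ℝ 2 (uncurry F) (u, t)) (hp : pu F u t ≠ 0) :
    DifferentiableAt ℝ (uncurry (nor F)) (u, t) :=
  (contDiffAt_nor hF hp one_add_one_eq_two.le).differentiableAt one_ne_zero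

theorem differentiableAt_curv (hF : ContDiffAt ℝ 3 (uncurry F) (u, t)) (hp : pu F u t ≠ 0) :
    DifferentiableAt ℝ (uncurry (curv F)) (u, t) :=
  (contDiffAt_curv (m := 1) hF hp (by norm_num)).differentiableAt one_ne_zero

theorem differentiableAt_sderiv_curv (hF : ContDiffAt ℝ 4 (uncurry F) (u, t))
    (hp : pu F u t ≠ 0) : DifferentiableAt ℝ (uncurry (sderiv F (curv F))) (u, t) :=
  (contDiffAt_sderiv (hF.of_le (by norm_num)) hp (contDiffAt_curv (m := 2) hF hp (by norm_num))
    one_add_one_eq_two.le).differentiableAt one_ne_zero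

end Regularity

section Frenet

theorem speed_smul_tang (F : ℝ → ℝ → E2) (u t : ℝ) : speed F u t • tang F u t = pu F u t := by
  rcases eq_or_ne (pu F u t) 0 with h | h
  · rw [tang, h, smul_zero, smul_zero]
  · exact smul_inv_smul₀ (norm_ne_zero_iff.2 h) _

theorem derivFst_eq_speed_smul_sderiv {X : Type*} [NormedAddCommGroup X] [NormedSpace ℝ X]
    (f : ℝ → ℝ → X) (hp : pu F u t ≠ 0) : derivFst f u t = speed F u t • sderiv F f u t :=
  (smul_inv_smul₀ (norm_ne_zero_iff.2 hp) _).symm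

theorem norm_tang (hp : pu F u t ≠ 0) : ‖tang F u t‖ = 1 :=
  norm_smul_inv_norm (𝕜 := ℝ) hp

theorem inner_nor_tang (F : ℝ → ℝ → E2) (u t : ℝ) : ⟪nor F u t, tang F u t⟫ = 0 :=
  inner_rot_self _

theorem norm_nor (hp : pu F u t ≠ 0) : ‖nor F u t‖ = 1 :=
  (norm_rot _).trans (norm_tang hp)

theorem inner_tang_fderiv_tang (hF : ContDiffAt ℝ 2 (uncurry F) (u, t)) (hp : pu F u t ≠ 0)
    (w : ℝ × ℝ) : ⟪tang F u t, fderiv ℝ (uncurry (tang F)) (u, t) w⟫ = 0 :=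
  inner_fderiv_eq_zero_of_norm_eq (differentiableAt_tang hF hp)
    ((eventually_pu_ne_zero (hF.of_le one_le_two) hp).mono fun _ hq => norm_tang hq) w

theorem derivFst_tang (hF : ContDiffAt ℝ 2 (uncurry F) (u, t)) (hp : pu F u t ≠ 0) :
    derivFst (tang F) u t = (curv F u t * speed F u t) • nor F u t := by
  have orthogonal : ⟪tang F u t, derivFst (tang F) u t⟫ = 0 := by
    rw [derivFst_eq_fderiv (differentiableAt_tang hF hp)]
    exact inner_tang_fderiv_tang hF hp _
  have component : ⟪derivFst (tang F) u t, nor F u t⟫ = curv F u t * speed F u t := by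
    rw [derivFst_eq_speed_smul_sderiv _ hp, real_inner_smul_left, mul_comm, curv]
  rw [← component]
  exact eq_inner_smul_rot_of_inner_eq_zero (norm_tang hp) orthogonal

theorem derivFst_nor (hF : ContDiffAt ℝ 2 (uncurry F) (u, t)) (hp : pu F u t ≠ 0) :
    derivFst (nor F) u t = -((curv F u t * speed F u t) • tang F u t) := by
  calc derivFst (nor F) u t
      = rot (derivFst (tang F) u t) :=
        (rotCLM.hasFDerivAt.comp_hasDerivAt u
          (hasDerivAt_derivFst (differentiableAt_tang hF hp))).deriv
    _ = -((curv F u t * speed F u t) • tang F u t) := by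
        rw [derivFst_tang hF hp, rot_smul, nor, rot_rot, smul_neg]

end Frenet

section Evolution

theorem derivSnd_pu_eq_add (hF : ContDiffAt ℝ 2 (uncurry F) (u, t)) (hp : pu F u t ≠ 0) :
    derivSnd (pu F) u t =
      speed F u t • derivSnd (tang F) u t + derivSnd (speed F) u t • tang F u t :=
  calc derivSnd (pu F) u t
      = derivSnd (fun u t => speed F u t • tang F u t) u t := by simp only [speed_smul_tang]
    _ = _ := ((hasDerivAt_derivSnd (differentiableAt_speed hF hp)).smul
        (hasDerivAt_derivSnd (differentiableAt_tang hF hp))).deriv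

/-- The curve shortening equation `∂ₜF = κN` on a neighbourhood of the parameter `p = (u, t)`; as
an equality of germs it may be differentiated in both variables. -/
def IsCSFNear (F : ℝ → ℝ → E2) (p : ℝ × ℝ) : Prop :=
  uncurry (pt F) =ᶠ[𝓝 p] uncurry fun u t => curv F u t • nor F u t

theorem derivSnd_pu (hF : ContDiffAt ℝ 3 (uncurry F) (u, t)) (hp : pu F u t ≠ 0)
    (hflow : IsCSFNear F (u, t)) :
    derivSnd (pu F) u t = (speed F u t * sderiv F (curv F) u t) • nor F u t -
      (curv F u t ^ 2 * speed F u t) • tang F u t := by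
  have hF2 : ContDiffAt ℝ 2 (uncurry F) (u, t) := hF.of_le (by norm_num)
  calc derivSnd (pu F) u t
      = derivFst (pt F) u t := derivSnd_derivFst_comm hF (by norm_num)
    _ = derivFst (fun u t => curv F u t • nor F u t) u t := derivFst_congr hflow
    _ = curv F u t • derivFst (nor F) u t + derivFst (curv F) u t • nor F u t :=
        ((hasDerivAt_derivFst (differentiableAt_curv hF hp)).smul
          (hasDerivAt_derivFst (differentiableAt_nor hF2 hp))).deriv
    _ = _ := by
        rw [derivFst_nor hF2 hp, derivFst_eq_speed_smul_sderiv (curv F) hp, smul_eq_mul]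
        module

theorem derivSnd_speed (hF : ContDiffAt ℝ 3 (uncurry F) (u, t)) (hp : pu F u t ≠ 0)
    (hflow : IsCSFNear F (u, t)) :
    derivSnd (speed F) u t = -(curv F u t ^ 2 * speed F u t) := by
  have hF2 : ContDiffAt ℝ 2 (uncurry F) (u, t) := hF.of_le (by norm_num)
  have orthogonal : ⟪tang F u t, derivSnd (tang F) u t⟫ = 0 := by
    rw [derivSnd_eq_fderiv (differentiableAt_tang hF2 hp)]
    exact inner_tang_fderiv_tang hF2 hp _
  have tangential := congrArg (⟪tang F u t, ·⟫)
    ((derivSnd_pu_eq_add hF2 hp).symm.trans (derivSnd_pu hF hp hflow))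
  simpa [inner_add_right, inner_sub_right, real_inner_smul_right, norm_tang hp, orthogonal,
    real_inner_comm, inner_nor_tang] using tangential

theorem derivSnd_tang (hF : ContDiffAt ℝ 3 (uncurry F) (u, t)) (hp : pu F u t ≠ 0)
    (hflow : IsCSFNear F (u, t)) :
    derivSnd (tang F) u t = sderiv F (curv F) u t • nor F u t := by
  have h := (derivSnd_pu_eq_add (hF.of_le (by norm_num)) hp).symm.trans (derivSnd_pu hF hp hflow)
  rw [derivSnd_speed hF hp hflow, neg_smul, ← sub_eq_add_neg, sub_left_inj, mul_smul] at h
  exact smul_right_injective E2 (norm_ne_zero_iff.2 hp) h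

theorem derivSnd_nor (hF : ContDiffAt ℝ 3 (uncurry F) (u, t)) (hp : pu F u t ≠ 0)
    (hflow : IsCSFNear F (u, t)) :
    derivSnd (nor F) u t = -(sderiv F (curv F) u t • tang F u t) := by
  calc derivSnd (nor F) u t
      = rot (derivSnd (tang F) u t) :=
        (rotCLM.hasFDerivAt.comp_hasDerivAt t
          (hasDerivAt_derivSnd (differentiableAt_tang (hF.of_le (by norm_num)) hp))).deriv
    _ = -(sderiv F (curv F) u t • tang F u t) := by
        rw [derivSnd_tang hF hp hflow, rot_smul, nor, rot_rot, smul_neg]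

theorem derivSnd_derivFst_tang (hF : ContDiffAt ℝ 3 (uncurry F) (u, t)) (hp : pu F u t ≠ 0)
    (hflow : IsCSFNear F (u, t)) :
    derivSnd (derivFst (tang F)) u t =
      derivSnd (fun u t => curv F u t * speed F u t) u t • nor F u t -
        (curv F u t * speed F u t * sderiv F (curv F) u t) • tang F u t := by
  have hF2 : ContDiffAt ℝ 2 (uncurry F) (u, t) := hF.of_le (by norm_num)
  have frenet : uncurry (derivFst (tang F)) =ᶠ[𝓝 (u, t)]
      uncurry fun u t => (curv F u t * speed F u t) • nor F u t := by
    filter_upwards [hF2.eventually (by simp), eventually_pu_ne_zero (hF.of_le (by norm_num)) hp]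
      with _ hFq hq using derivFst_tang hFq hq
  have hκv : DifferentiableAt ℝ (uncurry fun u t => curv F u t * speed F u t) (u, t) :=
    (differentiableAt_curv hF hp).mul (differentiableAt_speed hF2 hp)
  calc derivSnd (derivFst (tang F)) u t
      = derivSnd (fun u t => (curv F u t * speed F u t) • nor F u t) u t := derivSnd_congr frenet
    _ = (curv F u t * speed F u t) • derivSnd (nor F) u t +
          derivSnd (fun u t => curv F u t * speed F u t) u t • nor F u t :=
        ((hasDerivAt_derivSnd hκv).smul
          (hasDerivAt_derivSnd (differentiableAt_nor hF2 hp))).deriv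
    _ = _ := by
        rw [derivSnd_nor hF hp hflow]
        module

theorem derivFst_derivSnd_tang (hF : ContDiffAt ℝ 4 (uncurry F) (u, t)) (hp : pu F u t ≠ 0)
    (hflow : IsCSFNear F (u, t)) :
    derivFst (derivSnd (tang F)) u t =
      derivFst (sderiv F (curv F)) u t • nor F u t -
        (curv F u t * speed F u t * sderiv F (curv F) u t) • tang F u t := by
  have hF2 : ContDiffAt ℝ 2 (uncurry F) (u, t) := hF.of_le (by norm_num)
  have hF3 : ContDiffAt ℝ 3 (uncurry F) (u, t) := hF.of_le (by norm_num)
  have evolution : uncurry (derivSnd (tang F)) =ᶠ[𝓝 (u, t)]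
      uncurry fun u t => sderiv F (curv F) u t • nor F u t := by
    filter_upwards [hF3.eventually (by simp), eventually_pu_ne_zero (hF.of_le (by norm_num)) hp,
      hflow.eventually_nhds] with _ hFq hq hflowq using derivSnd_tang hFq hq hflowq
  calc derivFst (derivSnd (tang F)) u t
      = derivFst (fun u t => sderiv F (curv F) u t • nor F u t) u t := derivFst_congr evolution
    _ = sderiv F (curv F) u t • derivFst (nor F) u t +
          derivFst (sderiv F (curv F)) u t • nor F u t :=
        ((hasDerivAt_derivFst (differentiableAt_sderiv_curv hF hp)).smul
          (hasDerivAt_derivFst (differentiableAt_nor hF2 hp))).deriv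
    _ = _ := by
        rw [derivFst_nor hF2 hp]
        module

theorem derivSnd_curv_mul_speed (hF : ContDiffAt ℝ 4 (uncurry F) (u, t)) (hp : pu F u t ≠ 0)
    (hflow : IsCSFNear F (u, t)) :
    derivSnd (fun u t => curv F u t * speed F u t) u t = derivFst (sderiv F (curv F)) u t := by
  have hT : ContDiffAt ℝ 2 (uncurry (tang F)) (u, t) := contDiffAt_tang hF hp (by norm_num)
  have h := derivSnd_derivFst_comm hT (by norm_num)
  rw [derivSnd_derivFst_tang (hF.of_le (by norm_num)) hp hflow,
    derivFst_derivSnd_tang hF hp hflow, sub_left_inj] at h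
  exact smul_left_injective ℝ (norm_ne_zero_iff.1 ((norm_nor hp).trans_ne one_ne_zero)) h

theorem derivSnd_sq_curv_mul_speed (hF : ContDiffAt ℝ 4 (uncurry F) (u, t)) (hp : pu F u t ≠ 0)
    (hflow : IsCSFNear F (u, t)) :
    derivSnd (fun u t => curv F u t ^ 2 * speed F u t) u t =
      2 * (curv F u t * derivFst (sderiv F (curv F)) u t) + curv F u t ^ 4 * speed F u t := by
  have hF3 : ContDiffAt ℝ 3 (uncurry F) (u, t) := hF.of_le (by norm_num)
  have hκ := hasDerivAt_derivSnd (differentiableAt_curv hF3 hp)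
  have hv := hasDerivAt_derivSnd (differentiableAt_speed (hF.of_le (by norm_num)) hp)
  have curv_mul_speed : derivSnd (curv F) u t * speed F u t +
      curv F u t * derivSnd (speed F) u t = derivFst (sderiv F (curv F)) u t :=
    (hκ.mul hv).deriv.symm.trans (derivSnd_curv_mul_speed hF hp hflow)
  have product_rule : derivSnd (fun u t => curv F u t ^ 2 * speed F u t) u t =
      2 * curv F u t * derivSnd (curv F) u t * speed F u t +
        curv F u t ^ 2 * derivSnd (speed F) u t :=
    ((hκ.fun_pow 2).fun_mul hv).deriv.trans (by simp)
  rw [product_rule, ← curv_mul_speed, derivSnd_speed hF3 hp hflow]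
  ring

end Evolution

theorem integral_mul_derivFst_sderiv {f : ℝ → ℝ → ℝ}
    (hF : ∀ u ∈ [[a, b]], ContDiffAt ℝ 2 (uncurry F) (u, t))
    (hp : ∀ u ∈ [[a, b]], pu F u t ≠ 0)
    (hf : ∀ u ∈ [[a, b]], ContDiffAt ℝ 2 (uncurry f) (u, t)) :
    ∫ u in a..b, f u t * derivFst (sderiv F f) u t =
      f b t * sderiv F f b t - f a t * sderiv F f a t -
        ∫ u in a..b, sderiv F f u t ^ 2 * speed F u t := by
  have hs (u) (hu : u ∈ [[a, b]]) : ContDiffAt ℝ 1 (uncurry (sderiv F f)) (u, t) :=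
    contDiffAt_sderiv (hF u hu) (hp u hu) (hf u hu) one_add_one_eq_two.le
  have integrable_derivFst {g : ℝ → ℝ → ℝ}
      (hg : ∀ u ∈ [[a, b]], ContDiffAt ℝ 1 (uncurry g) (u, t)) :
      IntervalIntegrable (fun u => derivFst g u t) volume a b :=
    intervalIntegrable_fst_of_continuousAt fun u hu =>
      (contDiffAt_derivFst (m := 0) (hg u hu) (zero_add 1).le).continuousAt
  rw [intervalIntegral.integral_mul_deriv_eq_deriv_mul
    (fun u hu => hasDerivAt_derivFst ((hf u hu).differentiableAt two_ne_zero))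
    (fun u hu => hasDerivAt_derivFst ((hs u hu).differentiableAt one_ne_zero))
    (integrable_derivFst fun u hu => (hf u hu).of_le one_le_two) (integrable_derivFst hs)]
  congr 1
  refine intervalIntegral.integral_congr fun u hu => ?_
  simp only [derivFst_eq_speed_smul_sderiv f (hp u hu), smul_eq_mul]
  ring

theorem integral_two_mul_mul_derivFst_sderiv_add {f : ℝ → ℝ → ℝ} {g : ℝ → ℝ}
    (hF : ∀ u ∈ [[a, b]], ContDiffAt ℝ 2 (uncurry F) (u, t))
    (hp : ∀ u ∈ [[a, b]], pu F u t ≠ 0)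
    (hf : ∀ u ∈ [[a, b]], ContDiffAt ℝ 2 (uncurry f) (u, t))
    (hg : IntervalIntegrable (fun u => g u * speed F u t) volume a b) :
    ∫ u in a..b, (2 * (f u t * derivFst (sderiv F f) u t) + g u * speed F u t) =
      2 * (f b t * sderiv F f b t - f a t * sderiv F f a t) +
        ∫ u in a..b, (-2 * sderiv F f u t ^ 2 + g u) * speed F u t := by
  have hs (u) (hu : u ∈ [[a, b]]) : ContDiffAt ℝ 1 (uncurry (sderiv F f)) (u, t) :=
    contDiffAt_sderiv (hF u hu) (hp u hu) (hf u hu) one_add_one_eq_two.le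
  have hv (u) (hu : u ∈ [[a, b]]) : ContinuousAt (uncurry (speed F)) (u, t) :=
    (differentiableAt_speed (hF u hu) (hp u hu)).continuousAt
  have integrable_mul : IntervalIntegrable
      (fun u => f u t * derivFst (sderiv F f) u t) volume a b :=
    intervalIntegrable_fst_of_continuousAt
      (f := fun u t => f u t * derivFst (sderiv F f) u t) fun u hu =>
        (hf u hu).continuousAt.mul
          (contDiffAt_derivFst (m := 0) (hs u hu) (zero_add 1).le).continuousAt
  have integrable_sq : IntervalIntegrable (fun u => sderiv F f u t ^ 2 * speed F u t) volume a b :=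
    intervalIntegrable_fst_of_continuousAt (f := fun u t => sderiv F f u t ^ 2 * speed F u t)
      fun u hu => ((hs u hu).continuousAt.pow 2).mul (hv u hu)
  simp only [add_mul, mul_assoc]
  rw [intervalIntegral.integral_add (integrable_mul.const_mul _) hg,
    intervalIntegral.integral_add (integrable_sq.const_mul _) hg,
    intervalIntegral.integral_const_mul, intervalIntegral.integral_const_mul,
    integral_mul_derivFst_sderiv hF hp hf]
  ring

theorem hasDerivAt_integral_sq_curv (hF : ∀ u ∈ [[a, b]], ContDiffAt ℝ 4 (uncurry F) (u, t))
    (hp : ∀ u ∈ [[a, b]], pu F u t ≠ 0) (hflow : ∀ u ∈ uIoo a b, IsCSFNear F (u, t)) :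
    HasDerivAt (fun x => ∫ u in a..b, curv F u x ^ 2 * speed F u x)
      (∫ u in a..b,
        (2 * (curv F u t * derivFst (sderiv F (curv F)) u t) + curv F u t ^ 4 * speed F u t))
      t := by
  have hsmooth (u) (hu : u ∈ [[a, b]]) :
      ContDiffAt ℝ 1 (uncurry fun u t => curv F u t ^ 2 * speed F u t) (u, t) :=
    ((contDiffAt_curv (hF u hu) (hp u hu) (by norm_num)).pow 2).mul
      (contDiffAt_speed (hF u hu) (hp u hu) (by norm_num))
  have evolution : EqOn (fun u => derivSnd (fun u t => curv F u t ^ 2 * speed F u t) u t)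
      (fun u => 2 * (curv F u t * derivFst (sderiv F (curv F)) u t) +
        curv F u t ^ 4 * speed F u t) (uIoo a b) := fun u hu =>
    derivSnd_sq_curv_mul_speed (hF u (uIoo_subset_uIcc_self hu)) (hp u (uIoo_subset_uIcc_self hu))
      (hflow u hu)
  rw [← intervalIntegral.integral_congr_uIoo evolution]
  exact hasDerivAt_integral_of_contDiffAt hsmooth

theorem IsCSF.contDiffAt {T : ℝ} (hF : IsCSF F a b T) (p : ℝ × ℝ) (n : ℕ) :
    ContDiffAt ℝ n (uncurry F) p :=
  (contDiff_infty.1 hF.1 n).contDiffAt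

theorem IsCSF.isCSFNear {T : ℝ} (hF : IsCSF F a b T) (hu : u ∈ Ioo a b) (ht : t ∈ Ioo 0 T) :
    IsCSFNear F (u, t) := by
  filter_upwards [(isOpen_Ioo.prod isOpen_Ioo).mem_nhds (mk_mem_prod hu ht)] with q hq
  exact hF.2.2 q.1 (Ioo_subset_Icc_self hq.1) q.2 (Ioo_subset_Ico_self hq.2)

end CSF

open CSF Function in
theorem L2_curvature_evolution_general {F : ℝ → ℝ → E2} {a b t : ℝ}
    (hF : ∀ u ∈ uIcc a b, ContDiffAt ℝ 4 (uncurry F) (u, t))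
    (hp : ∀ u ∈ uIcc a b, pu F u t ≠ 0) (hflow : ∀ u ∈ uIoo a b, IsCSFNear F (u, t)) :
    HasDerivAt (fun x => ∫ u in a..b, curv F u x ^ 2 * speed F u x)
      (2 * (curv F b t * sderiv F (curv F) b t - curv F a t * sderiv F (curv F) a t) +
        ∫ u in a..b, (-2 * sderiv F (curv F) u t ^ 2 + curv F u t ^ 4) * speed F u t) t := by
  have hF2 (u) (hu : u ∈ uIcc a b) : ContDiffAt ℝ 2 (uncurry F) (u, t) :=
    (hF u hu).of_le (by norm_num)
  have hκ (u) (hu : u ∈ uIcc a b) : ContDiffAt ℝ 2 (uncurry (curv F)) (u, t) :=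
    contDiffAt_curv (hF u hu) (hp u hu) (by norm_num)
  have integrable_pow_four : IntervalIntegrable
      (fun u => curv F u t ^ 4 * speed F u t) volume a b :=
    intervalIntegrable_fst_of_continuousAt (f := fun u t => curv F u t ^ 4 * speed F u t)
      fun u hu => ((hκ u hu).continuousAt.pow 4).mul
        (differentiableAt_speed (hF2 u hu) (hp u hu)).continuousAt
  rw [← integral_two_mul_mul_derivFst_sderiv_add hF2 hp hκ integrable_pow_four]
  exact hasDerivAt_integral_sq_curv hF hp hflow

/-- with Dirichlet boundary conditions (κ = 0 at the endpoints),
d/dt ∫ₐᵇ κ² v du = ∫ₐᵇ (-2(∂ₛκ)² + κ⁴) v du for every t ∈ (0,T). -/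
theorem L2_curvature_evolution (a b T : ℝ) (hab : a < b) (hT : 0 < T)
    (F : ℝ → ℝ → E2) (hF : CSF.IsCSF F a b T)
    (hbc : ∀ t ∈ Ico 0 T, CSF.curv F a t = 0 ∧ CSF.curv F b t = 0) :
    ∀ t ∈ Ioo 0 T,
      HasDerivAt (fun x => ∫ u in a..b, (CSF.curv F u x) ^ 2 * CSF.speed F u x)
        (∫ u in a..b,
          (-2 * (CSF.sderiv F (CSF.curv F) u t) ^ 2 + (CSF.curv F u t) ^ 4)
            * CSF.speed F u t) t := by
  intro t ht
  have regular (u) (hu : u ∈ uIcc a b) : CSF.pu F u t ≠ 0 :=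
    hF.2.1 u (uIcc_of_le hab.le ▸ hu) t (Ioo_subset_Ico_self ht)
  have flow (u) (hu : u ∈ uIoo a b) : CSF.IsCSFNear F (u, t) :=
    hF.isCSFNear (uIoo_of_le hab.le ▸ hu) ht
  simpa [hbc t (Ioo_subset_Ico_self ht)] using
    L2_curvature_evolution_general (fun u _ => hF.contDiffAt (u, t) 4) regular flow
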